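/- Let A, A₀, B be commutative rings, f : A → A₀ a surjective ring homomorphism whose kernel is a nilpotent ideal, and g : B → A₀ an arbitrary ring homomorphism. Let A ×_{A₀} B be the fiber product ring, with projections p : A ×_{A₀} B → A and q : A ×_{A₀} B → B. Then the commutative square of schemes with maps Spec A₀ → Spec A, Spec A₀ → Spec B (induced by f and g) and Spec A → Spec(A ×_{A₀} B), Spec B → Spec(A ×_{A₀} B) (induced by p and q) is a pushout square in the category of schemes. -/

import Mathlib

/-!
Write `R = A ×_{A₀} B`. Since `f` is surjective with nil kernel, so is the projection `R → B`; hence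
`Spec A₀ → Spec A` and `Spec B → Spec R` are surjective. Two facts then give the universal property.

*Uniqueness.* The map `Spec A ⨿ Spec B → Spec R` is surjective, and scheme-theoretically dominant
because `R → A × B` is injective. Both properties survive base change to an open subscheme of
`Spec R`, and a quasi-compact morphism with both properties is an epimorphism
(`epi_of_surjective_of_isSchemeTheoreticallyDominant`). So a morphism out of any open of `Spec R`
is determined by its restrictions to the preimages in `Spec A` and `Spec B` (`Extends.unique`).

*Existence.* By uniqueness, descending `u : Spec A → X` and `v : Spec B → X` is a local problem on
`Spec R` (`exists_desc`). A point of `Spec R` comes from some `y : Spec B`. Choose an affine open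
`U ∋ v y`, then `b : B` with `y ∈ D(b) ⊆ v⁻¹(U)`, and `a : A` with `f a = g b`. Every point of
`D(a)` is the image of a point of `Spec A₀`, which maps to `D(b)` in `Spec B`, so `u` maps `D(a)`
into `U` as well. Fiber products of rings commute with localization
(`isLocalizationAway_ringFiberProduct`), so over `D((a, b)) ⊆ Spec R` the problem is the same one
for the localized rings and the affine target `U`, where it is the universal property of the fiber
product of rings (`exists_extends`).
-/

open AlgebraicGeometry CategoryTheory

/-- The fiber product ring `A ×_{A₀} B` of `f : A → A₀` and `g : B → A₀`, realized as the
subring of `A × B` of pairs `(a, b)` with `f a = g b`. -/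
def ringFiberProduct {A A₀ B : Type*} [CommRing A] [CommRing A₀] [CommRing B]
    (f : A →+* A₀) (g : B →+* A₀) : Subring (A × B) :=
  RingHom.eqLocus (f.comp (RingHom.fst A B)) (g.comp (RingHom.snd A B))

open CategoryTheory.Limits

/-! ### Fiber products of rings and their spectra -/

lemma mem_ringFiberProduct {A A₀ B : Type*} [CommRing A] [CommRing A₀] [CommRing B]
    {f : A →+* A₀} {g : B →+* A₀} {x : A × B} :
    x ∈ ringFiberProduct f g ↔ f x.1 = g x.2 := Iff.rfl

/-- The map `A ×_{A₀} B → A' ×_{A₀'} B'` induced by a morphism of cospans of algebras. -/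
def ringFiberProductMap {A A₀ B A' A₀' B' : Type*} [CommRing A] [CommRing A₀] [CommRing B]
    [CommRing A'] [CommRing A₀'] [CommRing B'] [Algebra A A'] [Algebra A₀ A₀'] [Algebra B B']
    (f : A →+* A₀) (g : B →+* A₀) (f' : A' →+* A₀') (g' : B' →+* A₀')
    (hf' : ∀ x, f' (algebraMap A A' x) = algebraMap A₀ A₀' (f x))
    (hg' : ∀ x, g' (algebraMap B B' x) = algebraMap A₀ A₀' (g x)) :
    ringFiberProduct f g →+* ringFiberProduct f' g' :=
  RingHom.codRestrict
    ((RingHom.prodMap (algebraMap A A') (algebraMap B B')).comp (ringFiberProduct f g).subtype)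
    (ringFiberProduct f' g') (fun x => by
      have hx := mem_ringFiberProduct.1 x.2
      simp [mem_ringFiberProduct, hf', hg', hx])

/-- Localization commutes with fiber products of rings. -/
lemma isLocalizationAway_ringFiberProduct {A A₀ B A' A₀' B' : Type*} [CommRing A] [CommRing A₀]
    [CommRing B] [CommRing A'] [CommRing A₀'] [CommRing B'] [Algebra A A'] [Algebra A₀ A₀']
    [Algebra B B'] (f : A →+* A₀) (g : B →+* A₀) (f' : A' →+* A₀') (g' : B' →+* A₀')
    (hf' : ∀ x, f' (algebraMap A A' x) = algebraMap A₀ A₀' (f x))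
    (hg' : ∀ x, g' (algebraMap B B' x) = algebraMap A₀ A₀' (g x))
    (r : ringFiberProduct f g)
    [IsLocalization.Away r.1.1 A'] [IsLocalization.Away r.1.2 B']
    [IsLocalization.Away (f r.1.1) A₀'] :
    let := (ringFiberProductMap f g f' g' hf' hg').toAlgebra
    IsLocalization.Away r (ringFiberProduct f' g') := by
  let := (ringFiberProductMap f g f' g' hf' hg').toAlgebra
  have hr : f r.1.1 = g r.1.2 := r.2
  have alg (x : ringFiberProduct f g) :
      (algebraMap (ringFiberProduct f g) (ringFiberProduct f' g') x).1 =
        (algebraMap A A' x.1.1, algebraMap B B' x.1.2) := rfl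
  have uA : IsUnit (algebraMap A A' r.1.1) := IsLocalization.Away.algebraMap_isUnit _
  have uB : IsUnit (algebraMap B B' r.1.2) := IsLocalization.Away.algebraMap_isUnit _
  have u₀ : IsUnit (algebraMap A₀ A₀' (f r.1.1)) := IsLocalization.Away.algebraMap_isUnit _
  refine IsLocalization.Away.mk r ?_ ?_ ?_
  · obtain ⟨a, ha⟩ := uA.exists_right_inv
    obtain ⟨b, hb⟩ := uB.exists_right_inv
    have hab : f' a = g' b := by
      apply u₀.mul_left_cancel
      conv_rhs => rw [hr]
      rw [← hf', ← hg', ← map_mul, ← map_mul, ha, hb, map_one, map_one]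
    refine IsUnit.of_mul_eq_one ⟨(a, b), hab⟩ (Subtype.ext ?_)
    rw [Subring.coe_mul, alg]
    exact Prod.ext ha hb
  · rintro ⟨⟨s, t⟩, hst⟩
    replace hst : f' s = g' t := hst
    obtain ⟨n, a, ha⟩ := IsLocalization.Away.surj r.1.1 s
    obtain ⟨m, b, hb⟩ := IsLocalization.Away.surj r.1.2 t
    have key : algebraMap A₀ A₀' (f (a * r.1.1 ^ m)) =
        algebraMap A₀ A₀' (g (b * r.1.2 ^ n)) := by
      rw [← hf', ← hg', map_mul (algebraMap A A'), map_mul (algebraMap B B'), ← ha, ← hb]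
      simp only [map_mul, map_pow, hf', hg', hst, ← hr]
      ring
    obtain ⟨k, hk⟩ := IsLocalization.Away.exists_of_eq (f r.1.1) key
    refine ⟨n + m + k, ⟨(a * r.1.1 ^ m * r.1.1 ^ k, b * r.1.2 ^ n * r.1.2 ^ k), ?_⟩, ?_⟩
    · rw [mem_ringFiberProduct]
      dsimp only
      rw [map_mul, map_mul g, map_pow f r.1.1 k, map_pow g _ k, ← hr, mul_comm, hk, mul_comm]
    · apply Subtype.ext
      rw [Subring.coe_mul, Subring.coe_pow, alg, alg]
      refine Prod.ext ?_ ?_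
      · simp only [Prod.fst_mul, Prod.pow_fst, map_mul, map_pow, ← ha]
        ring
      · simp only [Prod.snd_mul, Prod.pow_snd, map_mul, map_pow, ← hb]
        ring
  · intro x y hxy
    have h := congrArg Subtype.val hxy
    rw [alg, alg, Prod.mk.injEq] at h
    obtain ⟨n, hn⟩ := IsLocalization.Away.exists_of_eq r.1.1 h.1
    obtain ⟨m, hm⟩ := IsLocalization.Away.exists_of_eq r.1.2 h.2
    refine ⟨n + m, Subtype.ext (Prod.ext ?_ ?_)⟩
    · simp only [Subring.coe_mul, Subring.coe_pow, Prod.fst_mul, Prod.pow_fst]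
      rw [pow_add, mul_right_comm, hn]; ring
    · simp only [Subring.coe_mul, Subring.coe_pow, Prod.snd_mul, Prod.pow_snd]
      rw [pow_add, mul_assoc, hm]; ring

/-- `Spec A → Spec (A ×_{A₀} B)`, the projection to `A` as a morphism of schemes. -/
noncomputable abbrev specFst {A A₀ B : Type u} [CommRing A] [CommRing A₀] [CommRing B]
    (f : A →+* A₀) (g : B →+* A₀) :
    Spec (CommRingCat.of A) ⟶ Spec (CommRingCat.of (ringFiberProduct f g)) :=
  Spec.map (CommRingCat.ofHom ((RingHom.fst A B).comp (ringFiberProduct f g).subtype))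

/-- `Spec B → Spec (A ×_{A₀} B)`, the projection to `B` as a morphism of schemes. -/
noncomputable abbrev specSnd {A A₀ B : Type u} [CommRing A] [CommRing A₀] [CommRing B]
    (f : A →+* A₀) (g : B →+* A₀) :
    Spec (CommRingCat.of B) ⟶ Spec (CommRingCat.of (ringFiberProduct f g)) :=
  Spec.map (CommRingCat.ofHom ((RingHom.snd A B).comp (ringFiberProduct f g).subtype))

lemma specFst_comm {A A₀ B : Type u} [CommRing A] [CommRing A₀] [CommRing B]
    (f : A →+* A₀) (g : B →+* A₀) :
    Spec.map (CommRingCat.ofHom f) ≫ specFst f g =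
      Spec.map (CommRingCat.ofHom g) ≫ specSnd f g := by
  rw [← Spec.map_comp, ← Spec.map_comp]
  congr 1
  ext x
  exact x.2

/-- For affine targets, descent is the universal property of the fiber product of rings. -/
lemma exists_desc_of_isAffine {A A₀ B : Type u} [CommRing A] [CommRing A₀] [CommRing B]
    (f : A →+* A₀) (g : B →+* A₀) {Y : Scheme.{u}} [IsAffine Y]
    (u : Spec (CommRingCat.of A) ⟶ Y) (v : Spec (CommRingCat.of B) ⟶ Y)
    (h : Spec.map (CommRingCat.ofHom f) ≫ u = Spec.map (CommRingCat.ofHom g) ≫ v) :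
    ∃ w : Spec (CommRingCat.of (ringFiberProduct f g)) ⟶ Y,
      specFst f g ≫ w = u ∧ specSnd f g ≫ w = v := by
  obtain ⟨α, hα⟩ := Spec.map_surjective (u ≫ Y.isoSpec.hom)
  obtain ⟨β, hβ⟩ := Spec.map_surjective (v ≫ Y.isoSpec.hom)
  have hαβ : α ≫ CommRingCat.ofHom f = β ≫ CommRingCat.ofHom g := by
    apply Spec.map_injective
    rw [Spec.map_comp, Spec.map_comp, hα, hβ, reassoc_of% h]
  refine ⟨Spec.map (CommRingCat.ofHom ((α.hom.prod β.hom).codRestrict (ringFiberProduct f g)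
    fun x => congr($hαβ x))) ≫ Y.isoSpec.inv, ?_, ?_⟩
  · rw [← Category.assoc, Iso.comp_inv_eq, ← hα, ← Spec.map_comp]
    rfl
  · rw [← Category.assoc, Iso.comp_inv_eq, ← hβ, ← Spec.map_comp]
    rfl

/-! ### Uniqueness of the descended morphism -/

/-- A surjective, quasi-compact, scheme-theoretically dominant morphism is an epimorphism:
surjectivity determines the underlying map, and injectivity on sections the comorphism. -/
lemma epi_of_surjective_of_isSchemeTheoreticallyDominant {X Y : Scheme.{u}} (π : X ⟶ Y)
    [Surjective π] [QuasiCompact π] [IsSchemeTheoreticallyDominant π] : Epi π := by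
  constructor
  intro Z a b h
  have hbase : a.base = b.base := by
    ext y
    obtain ⟨x, rfl⟩ := π.surjective y
    exact congr($h x)
  refine Scheme.Hom.ext hbase fun U => ?_
  have : Mono (π.app (b ⁻¹ᵁ U)) :=
    ConcreteCategory.mono_of_injective _ (π.app_injective (b ⁻¹ᵁ U))
  rw [← cancel_mono (π.app (b ⁻¹ᵁ U)), Category.assoc, Scheme.Hom.naturality]
  have h1 := Scheme.Hom.congr_app h U
  simp only [Scheme.Hom.comp_app] at h1
  have cancel {P : CommRingCat.{u}} {V V' : X.Opensᵒᵖ} (φ : P ⟶ X.presheaf.obj V) (i : V ⟶ V')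
      (j : V' ⟶ V) : (φ ≫ X.presheaf.map i) ≫ X.presheaf.map j = φ := by
    rw [Category.assoc, ← CategoryTheory.Functor.map_comp,
      Subsingleton.elim (i ≫ j) (𝟙 _), CategoryTheory.Functor.map_id, Category.comp_id]
  rw [reassoc_of% h1]
  exact cancel _ _ _

lemma isSchemeTheoreticallyDominant_specMap {R S : CommRingCat.{u}} (φ : R ⟶ S)
    (hφ : Function.Injective φ) : IsSchemeTheoreticallyDominant (Spec.map φ) := by
  constructor
  have h : Function.Injective (Spec.map φ).appTop := by
    have := ConcreteCategory.mono_of_injective _ hφ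
    have h2 := Scheme.ΓSpecIso_naturality φ
    rw [← Iso.eq_comp_inv] at h2
    rw [h2]
    exact (ConcreteCategory.injective_of_mono_of_preservesPullback _)
  rw [Scheme.ker_of_isAffine, (RingHom.injective_iff_ker_eq_bot _).1 h]
  apply Scheme.IdealSheafData.ext_of_isAffine
  simp

lemma specMap_surjective {A A₀ : Type u} [CommRing A] [CommRing A₀] (f : A →+* A₀)
    (hf : Function.Surjective f) (hker : RingHom.ker f ≤ nilradical A) :
    Surjective (Spec.map (CommRingCat.ofHom f)) := by
  constructor
  intro x
  have := range_comap_of_surjective _ f hf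
  rw [(PrimeSpectrum.zeroLocus_eq_univ_iff _).2 hker] at this
  exact Set.range_eq_univ.1 this x

/-- `A ×_{A₀} B → B` is surjective because `f` is, and its kernel `ker f × 0` is nil. -/
lemma specSnd_surjective {A A₀ B : Type u} [CommRing A] [CommRing A₀] [CommRing B]
    (f : A →+* A₀) (g : B →+* A₀)
    (hf : Function.Surjective f) (hker : RingHom.ker f ≤ nilradical A) :
    Surjective (specSnd f g) := by
  refine specMap_surjective _ (fun b => ?_) fun x hx => ?_
  · obtain ⟨a, ha⟩ := hf (g b)
    exact ⟨⟨(a, b), ha⟩, rfl⟩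
  · have hx2 : x.1.2 = 0 := hx
    have hx1 : x.1.1 ∈ RingHom.ker f := by
      rw [RingHom.mem_ker, mem_ringFiberProduct.1 x.2, hx2, map_zero]
    obtain ⟨n, hn⟩ := hker hx1
    refine ⟨n + 1, Subtype.ext (Prod.ext ?_ ?_)⟩
    · change x.1.1 ^ (n + 1) = 0
      rw [pow_succ, hn, zero_mul]
    · change x.1.2 ^ (n + 1) = 0
      rw [hx2, zero_pow n.succ_ne_zero]

/-- The map `Spec A ⨿ Spec B → Spec (A ×_{A₀} B)`. -/
noncomputable abbrev coprodToSpec {A A₀ B : Type u} [CommRing A] [CommRing A₀] [CommRing B]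
    (f : A →+* A₀) (g : B →+* A₀) :
    (Spec (CommRingCat.of A) ⨿ Spec (CommRingCat.of B) : Scheme.{u}) ⟶
      Spec (CommRingCat.of (ringFiberProduct f g)) :=
  coprodSpec A B ≫ Spec.map (CommRingCat.ofHom (ringFiberProduct f g).subtype)

lemma inl_coprodToSpec {A A₀ B : Type u} [CommRing A] [CommRing A₀] [CommRing B]
    (f : A →+* A₀) (g : B →+* A₀) : coprod.inl ≫ coprodToSpec f g = specFst f g := by
  rw [coprodSpec_inl_assoc, ← Spec.map_comp]; rfl

lemma inr_coprodToSpec {A A₀ B : Type u} [CommRing A] [CommRing A₀] [CommRing B]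
    (f : A →+* A₀) (g : B →+* A₀) : coprod.inr ≫ coprodToSpec f g = specSnd f g := by
  rw [coprodSpec_inr_assoc, ← Spec.map_comp]; rfl

/-- Given `pA : SA → S` and `pB : SB → S`, a morphism `w` on a scheme `k : W → S` over `S` extends
`u : SA → X` and `v : SB → X` if it agrees with `u` on every scheme mapping to `SA` and `W`
compatibly over `S`, and likewise with `v`. Quantifying over test schemes `T` amounts to the
conditions on the fiber products `SA ×_S W` and `SB ×_S W`, and makes restriction along `W' → W`
immediate. -/
structure Extends {SA SB S W X : Scheme.{u}} (pA : SA ⟶ S) (pB : SB ⟶ S) (u : SA ⟶ X) (v : SB ⟶ X)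
    (k : W ⟶ S) (w : W ⟶ X) : Prop where
  left : ∀ {T : Scheme.{u}} (a : T ⟶ SA) (b : T ⟶ W), a ≫ pA = b ≫ k → a ≫ u = b ≫ w
  right : ∀ {T : Scheme.{u}} (a : T ⟶ SB) (b : T ⟶ W), a ≫ pB = b ≫ k → a ≫ v = b ≫ w

lemma Extends.precomp {SA SB S W X W' : Scheme.{u}} {pA : SA ⟶ S} {pB : SB ⟶ S} {u : SA ⟶ X}
    {v : SB ⟶ X} {k : W ⟶ S} {w : W ⟶ X} (h : Extends pA pB u v k w) (j : W' ⟶ W) :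
    Extends pA pB u v (j ≫ k) (j ≫ w) where
  left a b hab := by rw [h.left a (b ≫ j) (by simpa using hab), Category.assoc]
  right a b hab := by rw [h.right a (b ≫ j) (by simpa using hab), Category.assoc]

/-- Over an open `k : W → Spec (A ×_{A₀} B)`, at most one morphism extends `u` and `v`: the base
change of `Spec A ⨿ Spec B → Spec (A ×_{A₀} B)` along `k` remains surjective and
scheme-theoretically dominant, hence is an epimorphism. -/
lemma Extends.unique {A A₀ B : Type u} [CommRing A] [CommRing A₀] [CommRing B]
    (f : A →+* A₀) (g : B →+* A₀)
    (hf : Function.Surjective f) (hker : RingHom.ker f ≤ nilradical A) {W X : Scheme.{u}}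
    {u : Spec (CommRingCat.of A) ⟶ X} {v : Spec (CommRingCat.of B) ⟶ X}
    {k : W ⟶ Spec (CommRingCat.of (ringFiberProduct f g))} [IsOpenImmersion k] {w w' : W ⟶ X}
    (h : Extends (specFst f g) (specSnd f g) u v k w)
    (h' : Extends (specFst f g) (specSnd f g) u v k w') : w = w' := by
  have : Surjective (coprodToSpec f g) := by
    have := specSnd_surjective f g hf hker
    constructor
    intro x
    obtain ⟨y, rfl⟩ := (specSnd f g).surjective x
    rw [← inr_coprodToSpec]
    exact ⟨(coprod.inr : _ ⟶ Spec (CommRingCat.of A) ⨿ Spec (CommRingCat.of B)) y, rfl⟩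
  have : IsSchemeTheoreticallyDominant
      (Spec.map (CommRingCat.ofHom (ringFiberProduct f g).subtype)) :=
    isSchemeTheoreticallyDominant_specMap _ Subtype.val_injective
  have := epi_of_surjective_of_isSchemeTheoreticallyDominant (pullback.snd (coprodToSpec f g) k)
  rw [← cancel_epi (pullback.snd (coprodToSpec f g) k)]
  refine Scheme.Cover.hom_ext
    ((coprodOpenCover.{u, 0} _ _).pullback₁ (pullback.fst (coprodToSpec f g) k)) _ _ fun i => ?_
  have key := pullback.condition (f := coprodToSpec f g) (g := k)
  obtain i | i := i
  · have key2 := pullback.condition (f := pullback.fst (coprodToSpec f g) k)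
      (g := (coprod.inl : _ ⟶ Spec (CommRingCat.of A) ⨿ Spec (CommRingCat.of B)))
    have hab : pullback.snd (pullback.fst (coprodToSpec f g) k) coprod.inl ≫ specFst f g =
        (pullback.fst _ _ ≫ pullback.snd (coprodToSpec f g) k) ≫ k := by
      rw [Category.assoc, ← key, reassoc_of% key2, inl_coprodToSpec]
    exact (Category.assoc _ _ _).symm.trans ((h.left _ _ hab).symm.trans ((h'.left _ _ hab).trans
      (Category.assoc _ _ _)))
  · have key2 := pullback.condition (f := pullback.fst (coprodToSpec f g) k)
      (g := (coprod.inr : _ ⟶ Spec (CommRingCat.of A) ⨿ Spec (CommRingCat.of B)))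
    have hab : pullback.snd (pullback.fst (coprodToSpec f g) k) coprod.inr ≫ specSnd f g =
        (pullback.fst _ _ ≫ pullback.snd (coprodToSpec f g) k) ≫ k := by
      rw [Category.assoc, ← key, reassoc_of% key2, inr_coprodToSpec]
    exact (Category.assoc _ _ _).symm.trans ((h.right _ _ hab).symm.trans ((h'.right _ _ hab).trans
      (Category.assoc _ _ _)))

/-! ### Existence of the descended morphism -/

/-- Local existence: every point of `Spec (A ×_{A₀} B)` has an open neighbourhood carrying a
morphism to `X` that extends `u` and `v`. The point lifts to some `y : Spec B`; shrinking to a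
basic open `D(r)` with `r = (a, b)` and `y ∈ D(b)`, both `D(a)` and `D(b)` map into one affine open
of `X`, which reduces the claim to an affine target after localizing. -/
lemma exists_extends {A A₀ B : Type u} [CommRing A] [CommRing A₀] [CommRing B]
    (f : A →+* A₀) (g : B →+* A₀)
    (hf : Function.Surjective f) (hker : RingHom.ker f ≤ nilradical A) {X : Scheme.{u}}
    (u : Spec (CommRingCat.of A) ⟶ X) (v : Spec (CommRingCat.of B) ⟶ X)
    (huv : Spec.map (CommRingCat.ofHom f) ≫ u = Spec.map (CommRingCat.ofHom g) ≫ v)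
    (x : Spec (CommRingCat.of (ringFiberProduct f g))) :
    ∃ (W : Scheme.{u}) (k : W ⟶ Spec (CommRingCat.of (ringFiberProduct f g))) (w : W ⟶ X),
      IsOpenImmersion k ∧ x ∈ Set.range k ∧ Extends (specFst f g) (specSnd f g) u v k w := by
  have hs := specSnd_surjective f g hf hker
  have hs₀ := specMap_surjective f hf hker
  obtain ⟨y, rfl⟩ := (specSnd f g).surjective x
  obtain ⟨U, hU, hyU⟩ : ∃ U : X.Opens, IsAffineOpen U ∧ v y ∈ U := by
    obtain ⟨_, ⟨U, hU, rfl⟩, hyU, -⟩ :=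
      X.isBasis_affineOpens.exists_subset_of_mem_open (Set.mem_univ (v y)) isOpen_univ
    exact ⟨U, hU, hyU⟩
  have : IsAffine U := hU
  obtain ⟨_, ⟨b, rfl⟩, hyb, hbU⟩ :=
    PrimeSpectrum.isTopologicalBasis_basic_opens.exists_subset_of_mem_open
      (show y ∈ ((v ⁻¹ᵁ U : (Spec (CommRingCat.of B)).Opens) : Set _) from hyU) (v ⁻¹ᵁ U).isOpen
  obtain ⟨a, hab⟩ := hf (g b)
  let r : ringFiberProduct f g := ⟨(a, b), hab⟩
  let A' := Localization.Away a
  let B' := Localization.Away b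
  let A₀' := Localization.Away (f a)
  have : IsLocalization.Away (g b) A₀' := hab ▸ inferInstanceAs (IsLocalization.Away (f a) A₀')
  have : IsLocalization.Away r.1.1 A' := inferInstanceAs (IsLocalization.Away a A')
  have : IsLocalization.Away r.1.2 B' := inferInstanceAs (IsLocalization.Away b B')
  have : IsLocalization.Away (f r.1.1) A₀' := inferInstanceAs (IsLocalization.Away (f a) A₀')
  let f' : A' →+* A₀' := IsLocalization.Away.map A' A₀' f a
  let g' : B' →+* A₀' := IsLocalization.Away.map B' A₀' g b
  have hf' (z) : f' (algebraMap A A' z) = algebraMap A₀ A₀' (f z) := IsLocalization.map_eq _ _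
  have hg' (z) : g' (algebraMap B B' z) = algebraMap A₀ A₀' (g z) := IsLocalization.map_eq _ _
  let := (ringFiberProductMap f g f' g' hf' hg').toAlgebra
  have loc : IsLocalization.Away r (ringFiberProduct f' g') :=
    isLocalizationAway_ringFiberProduct f g f' g' hf' hg' r
  let jA := Spec.map (CommRingCat.ofHom (algebraMap A A'))
  let jB := Spec.map (CommRingCat.ofHom (algebraMap B B'))
  let j₀ := Spec.map (CommRingCat.ofHom (algebraMap A₀ A₀'))
  let k := Spec.map (CommRingCat.ofHom
    (algebraMap (ringFiberProduct f g) (ringFiberProduct f' g')))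
  have : IsOpenImmersion jA := IsOpenImmersion.of_isLocalization a
  have : IsOpenImmersion jB := IsOpenImmersion.of_isLocalization b
  have : IsOpenImmersion k := IsOpenImmersion.of_isLocalization r
  have rA : Set.range jA = {z | a ∉ z.asIdeal} :=
    PrimeSpectrum.localization_away_comap_range A' a
  have rB : Set.range jB = {z | b ∉ z.asIdeal} :=
    PrimeSpectrum.localization_away_comap_range B' b
  have rk : Set.range k = {z | r ∉ z.asIdeal} :=
    PrimeSpectrum.localization_away_comap_range (ringFiberProduct f' g') r
  have sA : specFst f' g' ≫ k = jA ≫ specFst f g := by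
    rw [← Spec.map_comp, ← Spec.map_comp]; rfl
  have sB : specSnd f' g' ≫ k = jB ≫ specSnd f g := by
    rw [← Spec.map_comp, ← Spec.map_comp]; rfl
  have sf : Spec.map (CommRingCat.ofHom f') ≫ jA = j₀ ≫ Spec.map (CommRingCat.ofHom f) := by
    rw [← Spec.map_comp, ← Spec.map_comp]
    congr 1
    ext z
    exact hf' z
  have sg : Spec.map (CommRingCat.ofHom g') ≫ jB = j₀ ≫ Spec.map (CommRingCat.ofHom g) := by
    rw [← Spec.map_comp, ← Spec.map_comp]
    congr 1
    ext z
    exact hg' z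
  have hv : Set.range (jB ≫ v) ⊆ Set.range U.ι := by
    rw [Scheme.Opens.range_ι]
    rintro _ ⟨z, rfl⟩
    exact hbU (rB.subset (Set.mem_range_self z))
  -- `Spec A₀ → Spec A` is surjective, so `u` maps `D(a)` into `U` because `v` maps `D(b)` there.
  have hu : Set.range (jA ≫ u) ⊆ Set.range U.ι := by
    rw [Scheme.Opens.range_ι]
    rintro _ ⟨z, rfl⟩
    obtain ⟨z₀, hz₀⟩ := (Spec.map (CommRingCat.ofHom f)).surjective (jA z)
    have hz : Spec.map (CommRingCat.ofHom f) z₀ ∈ {z : Spec (CommRingCat.of A) | a ∉ z.asIdeal} := by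
      rw [hz₀, ← rA]
      exact Set.mem_range_self z
    have h1 : f a ∉ z₀.asIdeal := hz
    have h2 : Spec.map (CommRingCat.ofHom g) z₀ ∈ {z : Spec (CommRingCat.of B) | b ∉ z.asIdeal} :=
      show g b ∉ z₀.asIdeal from hab ▸ h1
    rw [Scheme.Hom.comp_apply, ← hz₀, ← Scheme.Hom.comp_apply, huv, Scheme.Hom.comp_apply]
    exact hbU h2
  obtain ⟨w, hwu, hwv⟩ := exists_desc_of_isAffine f' g' (IsOpenImmersion.lift U.ι (jA ≫ u) hu)
    (IsOpenImmersion.lift U.ι (jB ≫ v) hv) (by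
      rw [← cancel_mono U.ι]
      simp only [Category.assoc, IsOpenImmersion.lift_fac]
      rw [reassoc_of% sf, reassoc_of% sg, huv])
  refine ⟨_, k, w ≫ U.ι, inferInstance, rk ▸ hyb, ?_, ?_⟩
  · intro T s t hst
    have hs : Set.range s ⊆ Set.range jA := by
      rintro _ ⟨z, rfl⟩
      rw [rA]
      have : (s ≫ specFst f g) z ∈
          {z : Spec (CommRingCat.of (ringFiberProduct f g)) | r ∉ z.asIdeal} := by
        rw [hst, ← rk]
        exact Set.mem_range_self (t z)
      exact this
    have ht : IsOpenImmersion.lift jA s hs ≫ specFst f' g' = t := by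
      rw [← cancel_mono k, Category.assoc, sA, IsOpenImmersion.lift_fac_assoc, hst]
    rw [← ht, Category.assoc, reassoc_of% hwu, IsOpenImmersion.lift_fac,
      IsOpenImmersion.lift_fac_assoc]
  · intro T s t hst
    have hs : Set.range s ⊆ Set.range jB := by
      rintro _ ⟨z, rfl⟩
      rw [rB]
      have : (s ≫ specSnd f g) z ∈
          {z : Spec (CommRingCat.of (ringFiberProduct f g)) | r ∉ z.asIdeal} := by
        rw [hst, ← rk]
        exact Set.mem_range_self (t z)
      exact this
    have ht : IsOpenImmersion.lift jB s hs ≫ specSnd f' g' = t := by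
      rw [← cancel_mono k, Category.assoc, sB, IsOpenImmersion.lift_fac_assoc, hst]
    rw [← ht, Category.assoc, reassoc_of% hwv, IsOpenImmersion.lift_fac,
      IsOpenImmersion.lift_fac_assoc]

/-- Compatible `u` and `v` descend to `Spec (A ×_{A₀} B)`: the local extensions agree on overlaps
by uniqueness, and therefore glue. -/
lemma exists_desc {A A₀ B : Type u} [CommRing A] [CommRing A₀] [CommRing B]
    (f : A →+* A₀) (g : B →+* A₀)
    (hf : Function.Surjective f) (hker : RingHom.ker f ≤ nilradical A) {X : Scheme.{u}}
    (u : Spec (CommRingCat.of A) ⟶ X) (v : Spec (CommRingCat.of B) ⟶ X)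
    (huv : Spec.map (CommRingCat.ofHom f) ≫ u = Spec.map (CommRingCat.ofHom g) ≫ v) :
    ∃ w : Spec (CommRingCat.of (ringFiberProduct f g)) ⟶ X,
      specFst f g ≫ w = u ∧ specSnd f g ≫ w = v := by
  choose W k w hk hx hw using exists_extends f g hf hker u v huv
  let 𝒰 : (Spec (CommRingCat.of (ringFiberProduct f g))).OpenCover :=
    { I₀ := Spec (CommRingCat.of (ringFiberProduct f g))
      X := W
      f := k
      mem₀ := by
        rw [Scheme.presieve₀_mem_precoverage_iff]
        exact ⟨fun x => ⟨x, hx x⟩, hk⟩ }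
  have compat (i j : 𝒰.I₀) : pullback.fst (𝒰.f i) (𝒰.f j) ≫ w i =
      pullback.snd (𝒰.f i) (𝒰.f j) ≫ w j := by
    refine Extends.unique f g hf hker (k := pullback.fst (𝒰.f i) (𝒰.f j) ≫ 𝒰.f i)
      ((hw i).precomp _) ?_
    rw [pullback.condition]
    exact (hw j).precomp _
  refine ⟨𝒰.glueMorphisms w compat, ?_, ?_⟩
  · refine Scheme.Cover.hom_ext (𝒰.pullback₁ (specFst f g)) _ _ fun i => ?_
    have h := pullback.condition (f := specFst f g) (g := 𝒰.f i)
    change pullback.fst _ _ ≫ _ = pullback.fst _ _ ≫ _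
    rw [reassoc_of% h]
    exact (congrArg (pullback.snd _ _ ≫ ·) (𝒰.ι_glueMorphisms w compat i)).trans
      ((hw i).left _ _ h).symm
  · refine Scheme.Cover.hom_ext (𝒰.pullback₁ (specSnd f g)) _ _ fun i => ?_
    have h := pullback.condition (f := specSnd f g) (g := 𝒰.f i)
    change pullback.fst _ _ ≫ _ = pullback.fst _ _ ≫ _
    rw [reassoc_of% h]
    exact (congrArg (pullback.snd _ _ ≫ ·) (𝒰.ι_glueMorphisms w compat i)).trans
      ((hw i).right _ _ h).symm

/-- Let `f : A → A₀` be a surjective ring homomorphism with nilpotent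
kernel and `g : B → A₀` an arbitrary ring homomorphism.  Then the square of schemes
`Spec A₀ → Spec A`, `Spec A₀ → Spec B`, `Spec A → Spec (A ×_{A₀} B)`,
`Spec B → Spec (A ×_{A₀} B)` (induced by `f`, `g` and the two projections of the fiber
product ring) is a pushout square in the category of schemes. -/
theorem spec_fiberProduct_isPushout
    {A A₀ B : Type u} [CommRing A] [CommRing A₀] [CommRing B]
    (f : A →+* A₀) (g : B →+* A₀)
    (hf : Function.Surjective f) (hker : IsNilpotent (RingHom.ker f)) :
    IsPushout
      (Spec.map (CommRingCat.ofHom f))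
      (Spec.map (CommRingCat.ofHom g))
      (Spec.map (CommRingCat.ofHom ((RingHom.fst A B).comp (ringFiberProduct f g).subtype)))
      (Spec.map (CommRingCat.ofHom ((RingHom.snd A B).comp (ringFiberProduct f g).subtype))) := by
  have hker' : RingHom.ker f ≤ nilradical A := fun x hx => by
    obtain ⟨n, hn⟩ := hker
    refine ⟨n, ?_⟩
    simpa [hn] using Ideal.pow_mem_pow hx n
  refine ⟨⟨specFst_comm f g⟩, ⟨PushoutCocone.IsColimit.mk _
    (fun s => (exists_desc f g hf hker' s.inl s.inr s.condition).choose)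
    (fun s => (exists_desc f g hf hker' s.inl s.inr s.condition).choose_spec.1)
    (fun s => (exists_desc f g hf hker' s.inl s.inr s.condition).choose_spec.2) ?_⟩⟩
  intro s m hm₁ hm₂
  have ext_id (w : Spec (CommRingCat.of (ringFiberProduct f g)) ⟶ s.pt)
      (h₁ : specFst f g ≫ w = s.inl) (h₂ : specSnd f g ≫ w = s.inr) :
      Extends (specFst f g) (specSnd f g) s.inl s.inr (𝟙 _) w :=
    ⟨fun a b hab => by rw [← h₁, reassoc_of% hab], fun a b hab => by rw [← h₂, reassoc_of% hab]⟩
  have spec := (exists_desc f g hf hker' s.inl s.inr s.condition).choose_spec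
  exact Extends.unique f g hf hker' (ext_id m hm₁ hm₂) (ext_id _ spec.1 spec.2)
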